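/- arXiv:2412.16273 — 10 statements merged into one kernel-verified Lean document; each statement's English description precedes it below -/
import Mathlib

section
/- Let A be a complex vector space and let ∘ and ∗ be two bilinear operations on A each making A an anti-pre-Lie algebra. Then (A,∘,∗) is a compatible anti-pre-Lie algebra (i.e., for all scalars k₁,k₂ ∈ ℂ the operation x⋆y = k₁(x∘y)+k₂(x∗y) makes A an anti-pre-Lie algebra) if and only if for all x,y,z ∈ A the following two identities hold: (i) x∘(y∗z)+x∗(y∘z)−y∘(x∗z)−y∗(x∘z) = [y,x]₂∘z + [y,x]₁∗z, and (ii) [x,y]₂∘z + [x,y]₁∗z + [y,z]₂∘x + [y,z]₁∗x + [z,x]₂∘y + [z,x]₁∗y = 0, where [x,y]₁ = x∘y−y∘x and [x,y]₂ = x∗y−y∗x. -/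
/-- An anti-pre-Lie algebra structure: a bilinear operation `m` satisfying
`x∗(y∗z) − y∗(x∗z) = [y,x]∗z` and `[x,y]∗z + [y,z]∗x + [z,x]∗y = 0`,
where `[x,y] = x∗y − y∗x`. -/
def IsAntiPreLie {A : Type*} [AddCommGroup A] [Module ℂ A]
    (m : A →ₗ[ℂ] A →ₗ[ℂ] A) : Prop :=
  (∀ x y z : A, m x (m y z) - m y (m x z) = m (m y x - m x y) z) ∧
  (∀ x y z : A, m (m x y - m y x) z + m (m y z - m z y) x + m (m z x - m x z) y = 0)

/-- For two anti-pre-Lie operations `∘ = c` and `∗ = s` on a complex vector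
space `A`, the pair is a compatible anti-pre-Lie algebra (every linear combination
`k₁ • c + k₂ • s` is anti-pre-Lie) iff the two mixed identities hold. -/
theorem compatible_antiPreLie_iff {A : Type*} [AddCommGroup A] [Module ℂ A]
    (c s : A →ₗ[ℂ] A →ₗ[ℂ] A) (hc : IsAntiPreLie c) (hs : IsAntiPreLie s) :
    (∀ k₁ k₂ : ℂ, IsAntiPreLie (k₁ • c + k₂ • s)) ↔
      ((∀ x y z : A,
          c x (s y z) + s x (c y z) - c y (s x z) - s y (c x z)
            = c (s y x - s x y) z + s (c y x - c x y) z) ∧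
       (∀ x y z : A,
          c (s x y - s y x) z + s (c x y - c y x) z
            + c (s y z - s z y) x + s (c y z - c z y) x
            + c (s z x - s x z) y + s (c z x - c x z) y = 0)) := by
  obtain ⟨c1, c2⟩ := hc
  obtain ⟨s1, s2⟩ := hs
  constructor
  · intro h
    obtain ⟨h1, h2⟩ := h 1 1
    refine ⟨fun x y z => ?_, fun x y z => ?_⟩
    · have a := h1 x y z
      have b := c1 x y z
      have d := s1 x y z
      simp only [map_add, map_sub, map_smul, LinearMap.add_apply, LinearMap.sub_apply, LinearMap.smul_apply, one_smul] at a b d ⊢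
      linear_combination (norm := module) a - b - d
    · have a := h2 x y z
      have b := c2 x y z
      have d := s2 x y z
      simp only [map_add, map_sub, map_smul, LinearMap.add_apply, LinearMap.sub_apply, LinearMap.smul_apply, one_smul] at a b d ⊢
      linear_combination (norm := module) a - b - d
  · rintro ⟨h1, h2⟩ k l
    refine ⟨fun x y z => ?_, fun x y z => ?_⟩
    · have a := h1 x y z
      have b := c1 x y z
      have d := s1 x y z
      simp only [map_add, map_sub, map_smul, LinearMap.add_apply, LinearMap.sub_apply, LinearMap.smul_apply, one_smul] at a b d ⊢
      linear_combination (norm := module) (k * l) • a + (k * k) • b + (l * l) • d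
    · have a := h2 x y z
      have b := c2 x y z
      have d := s2 x y z
      simp only [map_add, map_sub, map_smul, LinearMap.add_apply, LinearMap.sub_apply, LinearMap.smul_apply, one_smul] at a b d ⊢
      linear_combination (norm := module) (k * l) • a + (k * k) • b + (l * l) • d
end

section
/- Let (A,∘,∗) be a compatible anti-pre-Lie algebra, and define [x,y]₁ = x∘y−y∘x, [x,y]₂ = x∗y−y∗x, and the left multiplication operators L∘(x)y = x∘y and L∗(x)y = x∗y. Then (−L∘, −L∗, A) is a representation of the sub-adjacent compatible Lie algebra; explicitly, for all x,y ∈ A the following hold as operators on A: (1) −L∘([x,y]₁) = L∘(x)L∘(y) − L∘(y)L∘(x), (2) −L∗([x,y]₂) = L∗(x)L∗(y) − L∗(y)L∗(x), and (3) −L∘([x,y]₂) − L∗([x,y]₁) = L∘(x)L∗(y) − L∘(y)L∗(x) + L∗(x)L∘(y) − L∗(y)L∘(x). -/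
/-- If `(A, ∘ = c, ∗ = s)` is a compatible anti-pre-Lie algebra, then
`(−L∘, −L∗, A)` is a representation of the sub-adjacent compatible Lie algebra:
(1) `−L∘([x,y]₁) = L∘(x)L∘(y) − L∘(y)L∘(x)`,
(2) `−L∗([x,y]₂) = L∗(x)L∗(y) − L∗(y)L∗(x)`,
(3) `−L∘([x,y]₂) − L∗([x,y]₁) = L∘(x)L∗(y) − L∘(y)L∗(x) + L∗(x)L∘(y) − L∗(y)L∘(x)`,
as operators on `A`, where `[x,y]₁ = x∘y−y∘x`, `[x,y]₂ = x∗y−y∗x`. -/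
theorem neg_left_mul_representation {A : Type*} [AddCommGroup A] [Module ℂ A]
    (c s : A →ₗ[ℂ] A →ₗ[ℂ] A)
    (h : ∀ k₁ k₂ : ℂ, IsAntiPreLie (k₁ • c + k₂ • s)) :
    (∀ x y : A, -(c (c x y - c y x)) = c x ∘ₗ c y - c y ∘ₗ c x) ∧
    (∀ x y : A, -(s (s x y - s y x)) = s x ∘ₗ s y - s y ∘ₗ s x) ∧
    (∀ x y : A, -(c (s x y - s y x)) - s (c x y - c y x)
        = c x ∘ₗ s y - c y ∘ₗ s x + s x ∘ₗ c y - s y ∘ₗ c x) := by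
  have h1 : ∀ x y z : A, c x (c y z) - c y (c x z) = c (c y x) z - c (c x y) z := by
    intro x y z
    simpa using (h 1 0).1 x y z
  have h2 : ∀ x y z : A, s x (s y z) - s y (s x z) = s (s y x) z - s (s x y) z := by
    intro x y z
    simpa using (h 0 1).1 x y z
  refine ⟨fun x y => ?_, fun x y => ?_, fun x y => ?_⟩
  · ext z
    simp [h1 x y z]
  · ext z
    simp [h2 x y z]
  · ext z
    have h3 := (h 1 1).1 x y z
    have e1 := h1 x y z
    have e2 := h2 x y z
    simp only [one_smul, LinearMap.add_apply, LinearMap.sub_apply, map_add, map_sub] at h3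
    simp only [LinearMap.neg_apply, LinearMap.add_apply, LinearMap.sub_apply,
      LinearMap.comp_apply, map_sub]
    linear_combination (norm := module) e1 + e2 - h3
end

section
/- Let (A,∘,∗) be a compatible anti-pre-Lie algebra and set [x,y]₁ = x∘y−y∘x and [x,y]₂ = x∗y−y∗x. Then (A,[-,-]₁,[-,-]₂) is a compatible Lie algebra: each of [-,-]₁ and [-,-]₂ is a Lie bracket on A, and the mixed Jacobi identity [[x,y]₁,z]₂ + [[y,z]₁,x]₂ + [[z,x]₁,y]₂ + [[x,y]₂,z]₁ + [[y,z]₂,x]₁ + [[z,x]₂,y]₁ = 0 holds for all x,y,z ∈ A; equivalently, every linear combination k₁[-,-]₁ + k₂[-,-]₂ (k₁,k₂ ∈ ℂ) is a Lie bracket on A. -/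
/-- A bilinear operation is a Lie bracket: antisymmetric and satisfies the Jacobi
identity. -/
def IsLieBr {A : Type*} [AddCommGroup A] [Module ℂ A]
    (b : A →ₗ[ℂ] A →ₗ[ℂ] A) : Prop :=
  (∀ x y : A, b x y = -b y x) ∧
  (∀ x y z : A, b (b x y) z + b (b y z) x + b (b z x) y = 0)

theorem lieBr_of_antiPreLie {A : Type*} [AddCommGroup A] [Module ℂ A]
    (m b : A →ₗ[ℂ] A →ₗ[ℂ] A) (h : IsAntiPreLie m)
    (hb : ∀ x y : A, b x y = m x y - m y x) : IsLieBr b := by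
  obtain ⟨h1, h2⟩ := h
  refine ⟨fun x y => by rw [hb, hb]; abel, fun x y z => ?_⟩
  have e1 := h1 x y z
  have e2 := h1 y z x
  have e3 := h1 z x y
  have e4 := h2 x y z
  simp only [hb, map_sub, LinearMap.sub_apply] at *
  linear_combination (norm := module) (2 : ℂ) • e4 - e1 - e2 - e3

/-- The commutator brackets `[x,y]₁ = x∘y − y∘x`, `[x,y]₂ = x∗y − y∗x`
of a compatible anti-pre-Lie algebra form a compatible Lie algebra: each is a Lie
bracket, the mixed Jacobi identity holds, and every linear combination of them is a
Lie bracket. -/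
theorem subadjacent_compatible_lie {A : Type*} [AddCommGroup A] [Module ℂ A]
    (c s : A →ₗ[ℂ] A →ₗ[ℂ] A)
    (h : ∀ k₁ k₂ : ℂ, IsAntiPreLie (k₁ • c + k₂ • s))
    (b₁ b₂ : A →ₗ[ℂ] A →ₗ[ℂ] A)
    (hb₁ : ∀ x y : A, b₁ x y = c x y - c y x)
    (hb₂ : ∀ x y : A, b₂ x y = s x y - s y x) :
    IsLieBr b₁ ∧ IsLieBr b₂ ∧
    (∀ x y z : A,
      b₂ (b₁ x y) z + b₂ (b₁ y z) x + b₂ (b₁ z x) y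
        + b₁ (b₂ x y) z + b₁ (b₂ y z) x + b₁ (b₂ z x) y = 0) ∧
    (∀ k₁ k₂ : ℂ, IsLieBr (k₁ • b₁ + k₂ • b₂)) := by
  have H : ∀ k₁ k₂ : ℂ, IsLieBr (k₁ • b₁ + k₂ • b₂) := fun k₁ k₂ =>
    lieBr_of_antiPreLie _ _ (h k₁ k₂) (fun x y => by
      simp only [LinearMap.add_apply, LinearMap.smul_apply, hb₁, hb₂, smul_sub]
      abel)
  have H1 : IsLieBr b₁ := by simpa using H 1 0
  have H2 : IsLieBr b₂ := by simpa using H 0 1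
  refine ⟨H1, H2, fun x y z => ?_, H⟩
  have e := (H 1 1).2 x y z
  have e1 := H1.2 x y z
  have e2 := H2.2 x y z
  simp only [one_smul, LinearMap.add_apply, map_add] at e
  linear_combination (norm := module) e - e1 - e2
end

section
/- Let A be a complex vector space with two bilinear operations ∘ and ∗ such that (A,∘) and (A,∗) are anti-pre-Lie algebras, and set [x,y]₁ = x∘y−y∘x, [x,y]₂ = x∗y−y∗x, L∘(x)y = x∘y, L∗(x)y = x∗y. Then (A,∘,∗) is a compatible anti-pre-Lie algebra if and only if both of the following hold: (a) (A,[-,-]₁,[-,-]₂) is a compatible Lie algebra, i.e., [[x,y]₁,z]₂ + [[y,z]₁,x]₂ + [[z,x]₁,y]₂ + [[x,y]₂,z]₁ + [[y,z]₂,x]₁ + [[z,x]₂,y]₁ = 0 for all x,y,z ∈ A; and (b) −L∘([x,y]₂) − L∗([x,y]₁) = L∘(x)L∗(y) − L∘(y)L∗(x) + L∗(x)L∘(y) − L∗(y)L∘(x) as operators on A, for all x,y ∈ A. -/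
/-- For two anti-pre-Lie operations `∘ = c`, `∗ = s` on `A`, with
commutators `b₁, b₂`, `(A,∘,∗)` is a compatible anti-pre-Lie algebra iff
(a) `(A,b₁,b₂)` is a compatible Lie algebra (the mixed Jacobi identity holds), and
(b) `−L∘([x,y]₂) − L∗([x,y]₁) = L∘(x)L∗(y) − L∘(y)L∗(x) + L∗(x)L∘(y) − L∗(y)L∘(x)`
as operators on `A`. -/
theorem compatible_antiPreLie_iff_lieAdmissible {A : Type*} [AddCommGroup A] [Module ℂ A]
    (c s : A →ₗ[ℂ] A →ₗ[ℂ] A) (hc : IsAntiPreLie c) (hs : IsAntiPreLie s)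
    (b₁ b₂ : A →ₗ[ℂ] A →ₗ[ℂ] A)
    (hb₁ : ∀ x y : A, b₁ x y = c x y - c y x)
    (hb₂ : ∀ x y : A, b₂ x y = s x y - s y x) :
    (∀ k₁ k₂ : ℂ, IsAntiPreLie (k₁ • c + k₂ • s)) ↔
      ((∀ x y z : A,
          b₂ (b₁ x y) z + b₂ (b₁ y z) x + b₂ (b₁ z x) y
            + b₁ (b₂ x y) z + b₁ (b₂ y z) x + b₁ (b₂ z x) y = 0) ∧
       (∀ x y : A,
          -(c (b₂ x y)) - s (b₁ x y)
            = c x ∘ₗ s y - c y ∘ₗ s x + s x ∘ₗ c y - s y ∘ₗ c x)) := by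
  obtain ⟨hc1, hc2⟩ := hc
  obtain ⟨hs1, hs2⟩ := hs
  simp only [map_sub, LinearMap.sub_apply] at hc1 hc2 hs1 hs2
  constructor
  · intro h
    obtain ⟨h1, h2⟩ := h 1 1
    simp only [one_smul, map_sub, map_add, LinearMap.sub_apply, LinearMap.add_apply] at h1 h2
    have M1 : ∀ x y z : A, c x (s y z) - c y (s x z) + s x (c y z) - s y (c x z)
        = c (s y x) z - c (s x y) z + s (c y x) z - s (c x y) z := by
      intro x y z
      linear_combination (norm := module) h1 x y z - hc1 x y z - hs1 x y z
    refine ⟨fun x y z => ?_, fun x y => ?_⟩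
    · simp only [hb₁, hb₂, map_sub, LinearMap.sub_apply]
      have e1 := M1 x y z
      have e2 := M1 y z x
      have e3 := M1 z x y
      have q := h2 x y z
      have qc := hc2 x y z
      have qs := hs2 x y z
      linear_combination (norm := module) (2 : ℂ) • q - (2 : ℂ) • qc - (2 : ℂ) • qs - e1 - e2 - e3
    · ext z
      simp only [hb₁, hb₂, map_sub, LinearMap.sub_apply, LinearMap.add_apply,
        LinearMap.neg_apply, LinearMap.comp_apply]
      linear_combination (norm := module) - M1 x y z
  · rintro ⟨ha, hb⟩ k₁ k₂
    have M1 : ∀ x y z : A, c x (s y z) - c y (s x z) + s x (c y z) - s y (c x z)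
        = c (s y x) z - c (s x y) z + s (c y x) z - s (c x y) z := by
      intro x y z
      have h := LinearMap.congr_fun (hb x y) z
      simp only [hb₁, hb₂, map_sub, LinearMap.sub_apply, LinearMap.add_apply,
        LinearMap.neg_apply, LinearMap.comp_apply] at h
      linear_combination (norm := module) - h
    simp only [hb₁, hb₂, map_sub, LinearMap.sub_apply] at ha
    refine ⟨fun x y z => ?_, fun x y z => ?_⟩
    · simp only [map_sub, map_add, map_smul, LinearMap.sub_apply, LinearMap.add_apply,
        LinearMap.smul_apply]
      linear_combination (norm := module) (k₁ * k₁) • hc1 x y z + (k₂ * k₂) • hs1 x y z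
        + (k₁ * k₂) • M1 x y z
    · simp only [map_sub, map_add, map_smul, LinearMap.sub_apply, LinearMap.add_apply,
        LinearMap.smul_apply]
      linear_combination (norm := module) (k₁ * k₁) • hc2 x y z + (k₂ * k₂) • hs2 x y z
        + (k₁ * k₂ / 2) • ha x y z + (k₁ * k₂ / 2) • M1 x y z + (k₁ * k₂ / 2) • M1 y z x
        + (k₁ * k₂ / 2) • M1 z x y
end

section
/- Let A be a complex vector space with two commutative bilinear operations ∘ and ∗ (i.e., x∘y = y∘x and x∗y = y∗x for all x,y ∈ A). Then (A,∘,∗) is a compatible anti-pre-Lie algebra if and only if (A,∘,∗) is a compatible associative algebra, that is, (A,∘) and (A,∗) are associative and (x∘y)∗z + (x∗y)∘z = x∘(y∗z) + x∗(y∘z) for all x,y,z ∈ A. -/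
theorem isAntiPreLie_iff_of_comm {A : Type*} [AddCommGroup A] [Module ℂ A]
    (m : A →ₗ[ℂ] A →ₗ[ℂ] A) (hm : ∀ x y : A, m x y = m y x) :
    IsAntiPreLie m ↔ ∀ x y z : A, m (m x y) z = m x (m y z) := by
  constructor
  · rintro ⟨h, -⟩ x y z
    have h1 := h x z y
    rw [hm z x, sub_self, map_zero, LinearMap.zero_apply, sub_eq_zero] at h1
    rw [hm (m x y) z, ← h1, hm z y]
  · intro h
    refine ⟨fun x y z => ?_, fun x y z => ?_⟩
    · rw [← h, ← h, hm y x]; simp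
    · rw [hm y x, hm z y, hm x z]; simp

/-- If the two bilinear operations `∘ = c` and `∗ = s` on `A` are both
commutative, then `(A,∘,∗)` is a compatible anti-pre-Lie algebra iff `(A,∘,∗)` is a
compatible associative algebra: both operations are associative and
`(x∘y)∗z + (x∗y)∘z = x∘(y∗z) + x∗(y∘z)`. -/
theorem commutative_compatible_antiPreLie_iff_assoc {A : Type*} [AddCommGroup A]
    [Module ℂ A] (c s : A →ₗ[ℂ] A →ₗ[ℂ] A)
    (hc : ∀ x y : A, c x y = c y x) (hs : ∀ x y : A, s x y = s y x) :
    (∀ k₁ k₂ : ℂ, IsAntiPreLie (k₁ • c + k₂ • s)) ↔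
      ((∀ x y z : A, c (c x y) z = c x (c y z)) ∧
       (∀ x y z : A, s (s x y) z = s x (s y z)) ∧
       (∀ x y z : A, s (c x y) z + c (s x y) z = c x (s y z) + s x (c y z))) := by
  have key : ∀ k₁ k₂ : ℂ, IsAntiPreLie (k₁ • c + k₂ • s) ↔ ∀ x y z : A,
      (k₁ • c + k₂ • s) ((k₁ • c + k₂ • s) x y) z =
        (k₁ • c + k₂ • s) x ((k₁ • c + k₂ • s) y z) := fun k₁ k₂ =>
    isAntiPreLie_iff_of_comm _ (fun x y => by simp [hc x y, hs x y])
  simp only [key]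
  constructor
  · intro h
    have h1 : ∀ x y z : A, c (c x y) z = c x (c y z) := fun x y z => by
      simpa using h 1 0 x y z
    have h2 : ∀ x y z : A, s (s x y) z = s x (s y z) := fun x y z => by
      simpa using h 0 1 x y z
    refine ⟨h1, h2, fun x y z => ?_⟩
    have h3 := h 1 1 x y z
    simp only [one_smul, LinearMap.add_apply, map_add, h1, h2] at h3
    rw [← sub_eq_zero] at h3 ⊢
    rw [← h3]
    abel
  · rintro ⟨h1, h2, h3⟩ k₁ k₂ x y z
    have h4 : s (c x y) z = c x (s y z) + s x (c y z) - c (s x y) z :=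
      eq_sub_of_add_eq (h3 x y z)
    simp only [LinearMap.add_apply, LinearMap.smul_apply, map_add, map_smul, h1, h2, h4]
    module
end

section
/- Let (A,∘,∗) be a compatible anti-pre-Lie algebra and B a symmetric bilinear form on A that is invariant on (A,∘,∗), i.e., B(x∘y,z) = B(y, x∘z − z∘x) and B(x∗y,z) = B(y, x∗z − z∗x) for all x,y,z ∈ A. Then B is a commutative 2-cocycle on both commutator Lie brackets: B([x,y]ᵢ,z) + B([y,z]ᵢ,x) + B([z,x]ᵢ,y) = 0 for i = 1,2 and all x,y,z ∈ A, where [x,y]₁ = x∘y−y∘x and [x,y]₂ = x∗y−y∗x; consequently B is a commutative 2-cocycle for every bracket k₁[-,-]₁+k₂[-,-]₂. -/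
/-- Let `(A,∘ = c,∗ = s)` be a compatible anti-pre-Lie algebra and `B` a
symmetric bilinear form invariant on `(A,∘,∗)`: `B(x∘y,z) = B(y, x∘z − z∘x)` and
`B(x∗y,z) = B(y, x∗z − z∗x)`. Then `B` is a commutative 2-cocycle on both commutator
brackets `[x,y]₁ = x∘y−y∘x` and `[x,y]₂ = x∗y−y∗x`, and on every linear combination
`k₁[-,-]₁ + k₂[-,-]₂` of them. -/
theorem invariant_form_is_commutative_two_cocycle {A : Type*} [AddCommGroup A]
    [Module ℂ A] (c s : A →ₗ[ℂ] A →ₗ[ℂ] A)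
    (h : ∀ k₁ k₂ : ℂ, IsAntiPreLie (k₁ • c + k₂ • s))
    (B : A →ₗ[ℂ] A →ₗ[ℂ] ℂ)
    (hsym : ∀ x y : A, B x y = B y x)
    (hinv₁ : ∀ x y z : A, B (c x y) z = B y (c x z - c z x))
    (hinv₂ : ∀ x y z : A, B (s x y) z = B y (s x z - s z x)) :
    (∀ x y z : A,
      B (c x y - c y x) z + B (c y z - c z y) x + B (c z x - c x z) y = 0) ∧
    (∀ x y z : A,
      B (s x y - s y x) z + B (s y z - s z y) x + B (s z x - s x z) y = 0) ∧
    (∀ (k₁ k₂ : ℂ) (x y z : A),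
      B (k₁ • (c x y - c y x) + k₂ • (s x y - s y x)) z
        + B (k₁ • (c y z - c z y) + k₂ • (s y z - s z y)) x
        + B (k₁ • (c z x - c x z) + k₂ • (s z x - s x z)) y = 0) := by
  have key : ∀ m : A →ₗ[ℂ] A →ₗ[ℂ] A,
      (∀ x y z : A, B (m x y) z = B y (m x z - m z x)) →
      ∀ x y z : A,
        B (m x y - m y x) z + B (m y z - m z y) x + B (m z x - m x z) y = 0 := by
    intro m hm x y z
    have h1 := hm x y z
    have h2 := hm y x z
    rw [hsym y] at h1
    rw [hsym x] at h2
    simp only [map_sub, LinearMap.sub_apply] at h1 h2 ⊢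
    linear_combination h1 - h2
  refine ⟨key c hinv₁, key s hinv₂, ?_⟩
  intro k₁ k₂ x y z
  have h1 := key c hinv₁ x y z
  have h2 := key s hinv₂ x y z
  simp only [map_add, map_smul, LinearMap.add_apply, LinearMap.smul_apply, smul_eq_mul]
  linear_combination k₁ * h1 + k₂ * h2
end

section
/- Let (A,∘,∗) be a finite-dimensional compatible anti-pre-Lie algebra over ℂ, with commutator brackets [x,y]₁ = x∘y−y∘x and [x,y]₂ = x∗y−y∗x, left multiplications L∘(x)y = x∘y, L∗(x)y = x∗y, and dual adjoint actions on A* given by ⟨ad₁*(x)a*, y⟩ = −⟨a*, [x,y]₁⟩ and ⟨ad₂*(x)a*, y⟩ = −⟨a*, [x,y]₂⟩. Then there exists a nondegenerate invariant bilinear form on (A,∘,∗) if and only if there exists a linear isomorphism φ : A → A* with φ(−L∘(x)y) = ad₁*(x)φ(y) and φ(−L∗(x)y) = ad₂*(x)φ(y) for all x,y ∈ A (i.e., (−L∘,−L∗,A) and (ad₁*,ad₂*,A*) are equivalent as representations of the sub-adjacent compatible Lie algebra). -/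
/-- Let `(A,∘ = c,∗ = s)` be a finite-dimensional compatible
anti-pre-Lie algebra over `ℂ`. There exists a nondegenerate invariant bilinear form on
`(A,∘,∗)` iff there is a linear isomorphism `φ : A ≃ A*` with
`φ(−L∘(x)y) = ad₁*(x)φ(y)` and `φ(−L∗(x)y) = ad₂*(x)φ(y)`, i.e. pointwise
`φ(−(x∘y))(z) = −φ(y)([x,z]₁)` and `φ(−(x∗y))(z) = −φ(y)([x,z]₂)`. -/
theorem nondegenerate_invariant_form_iff_equivalent_reps {A : Type*} [AddCommGroup A]
    [Module ℂ A] [FiniteDimensional ℂ A]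
    (c s : A →ₗ[ℂ] A →ₗ[ℂ] A)
    (h : ∀ k₁ k₂ : ℂ, IsAntiPreLie (k₁ • c + k₂ • s)) :
    (∃ B : A →ₗ[ℂ] A →ₗ[ℂ] ℂ,
      (∀ x : A, (∀ y : A, B x y = 0) → x = 0) ∧
      (∀ x y z : A, B (c x y) z = B y (c x z - c z x)) ∧
      (∀ x y z : A, B (s x y) z = B y (s x z - s z x))) ↔
    (∃ φ : A ≃ₗ[ℂ] Module.Dual ℂ A,
      (∀ x y z : A, φ (-(c x y)) z = -(φ y (c x z - c z x))) ∧
      (∀ x y z : A, φ (-(s x y)) z = -(φ y (s x z - s z x)))) := by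
  constructor
  · rintro ⟨B, hB, hc, hs⟩
    have hinj : Function.Injective B := by
      rw [injective_iff_map_eq_zero]
      intro x hx
      exact hB x (fun y => by rw [hx]; rfl)
    refine ⟨LinearEquiv.ofInjectiveOfFinrankEq B hinj
      (Subspace.dual_finrank_eq (K := ℂ) (V := A)).symm, ?_, ?_⟩
    · intro x y z
      change B (-(c x y)) z = -(B y (c x z - c z x))
      rw [← hc, map_neg, LinearMap.neg_apply]
    · intro x y z
      change B (-(s x y)) z = -(B y (s x z - s z x))
      rw [← hs, map_neg, LinearMap.neg_apply]
  · rintro ⟨φ, hc, hs⟩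
    refine ⟨φ.toLinearMap, ?_, ?_, ?_⟩
    · intro x hx
      apply φ.injective
      rw [map_zero]
      exact LinearMap.ext hx
    · intro x y z
      have := hc x y z
      rw [map_neg, LinearMap.neg_apply, neg_inj] at this
      exact this
    · intro x y z
      have := hs x y z
      rw [map_neg, LinearMap.neg_apply, neg_inj] at this
      exact this
end

section
/- Let (A,∘,∗) be a finite-dimensional compatible anti-pre-Lie algebra over ℂ with commutator brackets [x,y]₁ = x∘y−y∘x and [x,y]₂ = x∗y−y∗x. Define, on the direct sum A ⊕ A*, the brackets [x+a*, y+b*]ᵢ = [x,y]ᵢ − Lᵢ*(x)b* + Lᵢ*(y)a* (i = 1,2), where ⟨L₁*(x)a*, y⟩ = −⟨a*, x∘y⟩ and ⟨L₂*(x)a*, y⟩ = −⟨a*, x∗y⟩ (so the A*-part is acted on by −L∘* and −L∗*), and define the bilinear form B(x+a*, y+b*) = ⟨x,b*⟩ + ⟨a*,y⟩. Then B is symmetric, nondegenerate, and is a commutative 2-cocycle on A ⊕ A* for every bracket k₁[-,-]₁ + k₂[-,-]₂ with k₁,k₂ ∈ ℂ. -/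
/-- Let `(A,∘ = c,∗ = s)` be a finite-dimensional compatible
anti-pre-Lie algebra. On `A ⊕ A*`, with the semidirect-product brackets
`[x+a*, y+b*]ᵢ = [x,y]ᵢ − Lᵢ*(x)b* + Lᵢ*(y)a*` (where `⟨L₁*(x)a*, y⟩ = −⟨a*, x∘y⟩`
and `⟨L₂*(x)a*, y⟩ = −⟨a*, x∗y⟩`), the form `B(x+a*, y+b*) = ⟨x,b*⟩ + ⟨a*,y⟩` is
symmetric, nondegenerate and a commutative 2-cocycle for every linear combination
`k₁[-,-]₁ + k₂[-,-]₂` of the two brackets. -/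
theorem semidirect_commutative_two_cocycle {A : Type*} [AddCommGroup A] [Module ℂ A]
    [FiniteDimensional ℂ A]
    (c s : A →ₗ[ℂ] A →ₗ[ℂ] A)
    (h : ∀ k₁ k₂ : ℂ, IsAntiPreLie (k₁ • c + k₂ • s))
    (br₁ br₂ : (A × Module.Dual ℂ A) → (A × Module.Dual ℂ A) → (A × Module.Dual ℂ A))
    (hbr₁ : ∀ p q : A × Module.Dual ℂ A,
      br₁ p q = (c p.1 q.1 - c q.1 p.1, q.2 ∘ₗ c p.1 - p.2 ∘ₗ c q.1))
    (hbr₂ : ∀ p q : A × Module.Dual ℂ A,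
      br₂ p q = (s p.1 q.1 - s q.1 p.1, q.2 ∘ₗ s p.1 - p.2 ∘ₗ s q.1))
    (Bf : (A × Module.Dual ℂ A) → (A × Module.Dual ℂ A) → ℂ)
    (hBf : ∀ p q : A × Module.Dual ℂ A, Bf p q = q.2 p.1 + p.2 q.1) :
    (∀ p q : A × Module.Dual ℂ A, Bf p q = Bf q p) ∧
    (∀ p : A × Module.Dual ℂ A, (∀ q : A × Module.Dual ℂ A, Bf p q = 0) → p = 0) ∧
    (∀ (k₁ k₂ : ℂ) (p q r : A × Module.Dual ℂ A),
      Bf (k₁ • br₁ p q + k₂ • br₂ p q) r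
        + Bf (k₁ • br₁ q r + k₂ • br₂ q r) p
        + Bf (k₁ • br₁ r p + k₂ • br₂ r p) q = 0) := by
  refine ⟨fun p q => ?_, fun p hp => ?_, fun k₁ k₂ p q r => ?_⟩
  · rw [hBf, hBf, add_comm]
  · obtain ⟨x, a⟩ := p
    have h1 : x = 0 := by
      rw [← Module.forall_dual_apply_eq_zero_iff ℂ]
      intro f
      have := hp (0, f)
      rw [hBf] at this
      simpa using this
    have h2 : a = 0 := by
      ext y
      have := hp (y, 0)
      rw [hBf] at this
      simpa using this
    rw [h1, h2]
    rfl
  · simp only [hBf, hbr₁, hbr₂, Prod.fst_add, Prod.snd_add, Prod.smul_fst, Prod.smul_snd,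
      map_add, map_smul, map_sub, LinearMap.add_apply, LinearMap.smul_apply,
      LinearMap.sub_apply, LinearMap.comp_apply, smul_eq_mul]
    ring
end

section
/- Let A be a complex vector space, B a symmetric bilinear form on A, and s₁, s₂ ∈ A fixed vectors. Define bilinear operations by x∘y = B(x,y)s₁ − B(x,s₁)y and x∗y = B(x,y)s₂ − B(x,s₂)y. Then (A,∘,∗) is a compatible anti-pre-Lie algebra: (A,∘) and (A,∗) are anti-pre-Lie algebras and every linear combination k₁∘+k₂∗ (k₁,k₂ ∈ ℂ) is an anti-pre-Lie operation. -/
/-- An anti-pre-Lie operation, stated for a plain binary operation. -/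
def IsAntiPreLieFn {A : Type*} [AddCommGroup A] [Module ℂ A] (m : A → A → A) : Prop :=
  (∀ x y z : A, m x (m y z) - m y (m x z) = m (m y x - m x y) z) ∧
  (∀ x y z : A, m (m x y - m y x) z + m (m y z - m z y) x + m (m z x - m x z) y = 0)

/-- Let `B` be a symmetric bilinear form on a complex vector space `A`
and `s₁ s₂ ∈ A`. The operations `x∘y = B(x,y)s₁ − B(x,s₁)y` and
`x∗y = B(x,y)s₂ − B(x,s₂)y` make `(A,∘,∗)` a compatible anti-pre-Lie algebra: both
are anti-pre-Lie operations, and so is every linear combination of them. -/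
theorem bilinear_form_gives_compatible_antiPreLie {A : Type*} [AddCommGroup A]
    [Module ℂ A] (B : A →ₗ[ℂ] A →ₗ[ℂ] ℂ)
    (hsym : ∀ x y : A, B x y = B y x) (s₁ s₂ : A)
    (c st : A → A → A)
    (hc : ∀ x y : A, c x y = B x y • s₁ - B x s₁ • y)
    (hst : ∀ x y : A, st x y = B x y • s₂ - B x s₂ • y) :
    IsAntiPreLieFn c ∧ IsAntiPreLieFn st ∧
    (∀ k₁ k₂ : ℂ, IsAntiPreLieFn (fun x y => k₁ • c x y + k₂ • st x y)) := by
  have key : ∀ s : A, IsAntiPreLieFn (fun x y : A => B x y • s - B x s • y) := by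
    intro s
    refine ⟨fun x y z => ?_, fun x y z => ?_⟩
    · simp only [map_sub, map_smul, LinearMap.sub_apply, LinearMap.smul_apply, smul_eq_mul]
      rw [hsym y x]
      module
    · simp only [map_sub, map_smul, LinearMap.sub_apply, LinearMap.smul_apply, smul_eq_mul]
      rw [hsym y x, hsym z x, hsym z y]
      module
  have e1 : c = fun x y : A => B x y • s₁ - B x s₁ • y := by
    funext x y
    exact hc x y
  have e2 : st = fun x y : A => B x y • s₂ - B x s₂ • y := by
    funext x y
    exact hst x y
  refine ⟨e1 ▸ key s₁, e2 ▸ key s₂, fun k₁ k₂ => ?_⟩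
  have e3 : (fun x y : A => k₁ • c x y + k₂ • st x y) =
      fun x y : A => B x y • (k₁ • s₁ + k₂ • s₂) - B x (k₁ • s₁ + k₂ • s₂) • y := by
    funext x y
    simp only [hc, hst, map_add, map_smul, smul_eq_mul]
    module
  rw [e3]
  exact key _
end

section
/- Let A be a complex vector space, B a symmetric bilinear form on A, and s₁, s₂ ∈ A fixed vectors. Define x∘y = B(x,y)s₁ − B(x,s₁)y and x∗y = B(x,y)s₂ − B(x,s₂)y. Then B is invariant on (A,∘,∗): B(x∘y, z) = B(y, x∘z − z∘x) and B(x∗y, z) = B(y, x∗z − z∗x) for all x,y,z ∈ A; consequently B is a commutative 2-cocycle on each of the commutator Lie brackets [x,y]₁ = x∘y−y∘x and [x,y]₂ = x∗y−y∗x, i.e., B([x,y]ᵢ,z) + B([y,z]ᵢ,x) + B([z,x]ᵢ,y) = 0 for i = 1,2. -/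
/-- Let `B` be a symmetric bilinear form on a complex vector space `A`
and `s₁ s₂ ∈ A`, with `x∘y = B(x,y)s₁ − B(x,s₁)y` and `x∗y = B(x,y)s₂ − B(x,s₂)y`.
Then `B` is invariant on `(A,∘,∗)`: `B(x∘y,z) = B(y, x∘z − z∘x)` and
`B(x∗y,z) = B(y, x∗z − z∗x)`; consequently `B` is a commutative 2-cocycle on each of
the commutator brackets `[x,y]₁ = x∘y−y∘x` and `[x,y]₂ = x∗y−y∗x`. -/
theorem bilinear_form_invariant_and_two_cocycle {A : Type*} [AddCommGroup A]
    [Module ℂ A] (B : A →ₗ[ℂ] A →ₗ[ℂ] ℂ)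
    (hsym : ∀ x y : A, B x y = B y x) (s₁ s₂ : A)
    (c st : A → A → A)
    (hc : ∀ x y : A, c x y = B x y • s₁ - B x s₁ • y)
    (hst : ∀ x y : A, st x y = B x y • s₂ - B x s₂ • y) :
    (∀ x y z : A, B (c x y) z = B y (c x z - c z x)) ∧
    (∀ x y z : A, B (st x y) z = B y (st x z - st z x)) ∧
    (∀ x y z : A,
      B (c x y - c y x) z + B (c y z - c z y) x + B (c z x - c x z) y = 0) ∧
    (∀ x y z : A,
      B (st x y - st y x) z + B (st y z - st z y) x + B (st z x - st x z) y = 0) := by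
  refine ⟨?_, ?_, ?_, ?_⟩ <;> intro x y z <;>
    simp only [hc, hst, map_sub, map_smul, LinearMap.sub_apply, LinearMap.smul_apply,
      smul_eq_mul] <;>
    simp only [hsym y x, hsym z x, hsym z y, hsym s₁ x, hsym s₁ y, hsym s₁ z, hsym s₂ x,
      hsym s₂ y, hsym s₂ z] <;> ring
end
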